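/- Suppose a group Γ acts on a Polish space X by Borel automorphisms and this action has a paradoxical decomposition. Then the action has a paradoxical decomposition in which every piece has the Baire property. -/

import Mathlib

open scoped Pointwise

/-- The families `A₁,…,Aₙ, B₁,…,B_m` together with group elements `α₁,…,αₙ, β₁,…,β_m` form a
paradoxical decomposition of the action of `Γ` on `X`: the pieces partition `X`, the sets
`αᵢ • Aᵢ` are pairwise disjoint with union `X`, and the sets `βⱼ • Bⱼ` are pairwise disjoint
with union `X`. -/
def IsParadoxicalDecomposition {Γ X : Type*} [Group Γ] [MulAction Γ X]
    {n m : ℕ} (A : Fin n → Set X) (B : Fin m → Set X) (α : Fin n → Γ) (β : Fin m → Γ) : Prop :=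
  (∀ i j, i ≠ j → Disjoint (A i) (A j)) ∧
  (∀ i j, i ≠ j → Disjoint (B i) (B j)) ∧
  (∀ i j, Disjoint (A i) (B j)) ∧
  ((⋃ i, A i) ∪ (⋃ j, B j)) = Set.univ ∧
  (∀ i j, i ≠ j → Disjoint (α i • A i) (α j • A j)) ∧
  (∀ i j, i ≠ j → Disjoint (β i • B i) (β j • B j)) ∧
  (⋃ i, α i • A i) = Set.univ ∧
  (⋃ j, β j • B j) = Set.univ

open scoped Classical in
/-- nonsplit -/
def NonSplit {V W : Type*} (N : V → Finset W) (F : Finset V) : Prop :=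
  ∀ F1 : Finset V, F1 ⊆ F → F1.Nonempty →
    (∀ v ∈ F1, ∀ u ∈ F, u ∉ F1 → Disjoint (N v) (N u)) → F1 = F

open scoped Classical in
/-- free neighbours -/
noncomputable def FN {V W : Type*} (N : V → Finset W) (U : Set W) (F : Finset V) : Finset W :=
  (F.biUnion N).filter (fun w => w ∉ U)

def HInv {V W : Type*} (N : V → Finset W) (n : ℕ) (P : Set V) (U : Set W) : Prop :=
  ∀ F : Finset V, (∀ v ∈ F, v ∈ P) → NonSplit N F → F.card + F.card / 2 ^ n ≤ (FN N U F).card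

def HHall {V W : Type*} (N : V → Finset W) (P : Set V) (U : Set W) : Prop :=
  ∀ F : Finset V, (∀ v ∈ F, v ∈ P) → F.card ≤ (FN N U F).card

def Dn {V W : Type*} (N : V → Finset W) : ℕ → V → V → Prop
  | 0, a, v => a = v
  | r + 1, a, v => ∃ u, Dn N r a u ∧ ¬ Disjoint (N u) (N v)

def Sparse {V W : Type*} (N : V → Finset W) (R : ℕ) (A : Set V) : Prop :=
  ∀ a ∈ A, ∀ a' ∈ A, ∀ u, Dn N R a u → Dn N R a' u → a = a'

lemma mem_FN {V W : Type*} {N : V → Finset W} {U : Set W} {F : Finset V} {w : W} :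
    w ∈ FN N U F ↔ (∃ v ∈ F, w ∈ N v) ∧ w ∉ U := by
  classical
  simp [FN]

open scoped Classical in
lemma HInv.hall {V W : Type*} {N : V → Finset W} {n : ℕ} {P : Set V} {U : Set W}
    (h : HInv N n P U) : HHall N P U := by
  intro F
  induction F using Finset.strongInduction with
  | H F ih =>
    intro hF
    by_cases hs : NonSplit N F
    · exact le_trans (Nat.le_add_right _ _) (h F hF hs)
    · unfold NonSplit at hs
      push Not at hs
      obtain ⟨F1, h1, hne, hd, hneq⟩ := hs
      have e1 := ih F1 (lt_of_le_of_ne h1 hneq) (fun v hv => hF v (h1 hv))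
      have e2 := ih (F \ F1) (Finset.sdiff_ssubset h1 hne)
        (fun v hv => hF v (Finset.mem_sdiff.1 hv).1)
      have hdis : Disjoint (FN N U F1) (FN N U (F \ F1)) := by
        rw [Finset.disjoint_left]
        intro w hw hw'
        rw [mem_FN] at hw hw'
        obtain ⟨⟨v, hv, hwv⟩, _⟩ := hw
        obtain ⟨⟨u, hu, hwu⟩, _⟩ := hw'
        rw [Finset.mem_sdiff] at hu
        exact Finset.disjoint_left.1 (hd v hv u hu.1 hu.2) hwv hwu
      have hsub : FN N U F1 ∪ FN N U (F \ F1) ⊆ FN N U F := by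
        intro w hw
        rw [Finset.mem_union, mem_FN, mem_FN] at hw
        rw [mem_FN]
        rcases hw with ⟨⟨v, hv, hwv⟩, hU⟩ | ⟨⟨v, hv, hwv⟩, hU⟩
        · exact ⟨⟨v, h1 hv, hwv⟩, hU⟩
        · exact ⟨⟨v, (Finset.mem_sdiff.1 hv).1, hwv⟩, hU⟩
      have e3 := Finset.card_le_card hsub
      rw [Finset.card_union_of_disjoint hdis] at e3
      have e4 := Finset.card_sdiff_add_card_eq_card h1
      omega

open scoped Classical in
lemma HHall.pick {V W : Type*} {N : V → Finset W} {P : Set V} {U : Set W}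
    (h : HHall N P U) {a : V} (ha : a ∈ P) :
    ∃ y ∈ N a, y ∉ U ∧ HHall N (P \ {a}) (insert y U) := by
  have key := (Finset.all_card_le_biUnion_card_iff_exists_injective
    (fun v : P => FN N U {v.1})).1 (by
      intro s
      have := h (s.map (Function.Embedding.subtype _)) (by
        intro v hv
        rw [Finset.mem_map] at hv
        obtain ⟨u, _, rfl⟩ := hv
        exact u.2)
      rw [Finset.card_map] at this
      refine this.trans (Finset.card_le_card ?_)
      intro w hw
      rw [mem_FN] at hw
      obtain ⟨⟨v, hv, hwv⟩, hU⟩ := hw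
      rw [Finset.mem_map] at hv
      obtain ⟨u, hu, rfl⟩ := hv
      rw [Finset.mem_biUnion]
      exact ⟨u, hu, mem_FN.2 ⟨⟨u, Finset.mem_singleton_self _, hwv⟩, hU⟩⟩)
  obtain ⟨g, hg, hgm⟩ := key
  have hg1 : ∀ v : P, g v ∈ N v.1 ∧ g v ∉ U := by
    intro v
    have := mem_FN.1 (hgm v)
    simpa using this
  refine ⟨g ⟨a, ha⟩, (hg1 _).1, (hg1 _).2, ?_⟩
  intro F hF
  rw [← Finset.card_attach]
  refine Finset.card_le_card_of_injOn (fun v => g ⟨v.1, (hF v.1 v.2).1⟩) ?_ ?_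
  · intro v _
    rw [Finset.mem_coe, mem_FN]
    refine ⟨⟨v.1, v.2, (hg1 _).1⟩, ?_⟩
    rintro (h1 | h1)
    · have := hg h1
      rw [Subtype.mk.injEq] at this
      exact (hF v.1 v.2).2 this
    · exact (hg1 _).2 h1
  · intro v _ u _ huv
    have := hg huv
    rw [Subtype.mk.injEq] at this
    exact Subtype.ext this

open scoped Classical in
lemma ball_card {V W : Type*} {N : V → Finset W} (hN : ∀ v, (N v).Nonempty) {F : Finset V}
    (hF : NonSplit N F) (a : V) (h1 : ∃ v ∈ F, Dn N 1 a v) (r : ℕ)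
    (hlt : ∃ v ∈ F, ¬ Dn N (r + 1) a v) : r + 1 ≤ (F.filter (fun v => Dn N (r + 1) a v)).card := by
  have mono : ∀ s v, Dn N s a v → Dn N (s + 1) a v := by
    intro s v hv
    refine ⟨v, hv, ?_⟩
    rw [disjoint_self]
    exact (hN v).ne_empty
  induction r with
  | zero =>
    obtain ⟨v, hv, hd⟩ := h1
    exact Finset.card_pos.2 ⟨v, Finset.mem_filter.2 ⟨hv, hd⟩⟩
  | succ r ih =>
    obtain ⟨v, hv, hd⟩ := hlt
    have h2 := ih ⟨v, hv, fun h => hd (mono _ _ h)⟩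
    have hsub : F.filter (fun v => Dn N (r + 1) a v) ⊆ F.filter (fun v => Dn N (r + 1 + 1) a v) := by
      intro u hu
      rw [Finset.mem_filter] at hu ⊢
      exact ⟨hu.1, mono _ _ hu.2⟩
    have hne : F.filter (fun v => Dn N (r + 1) a v) ≠ F.filter (fun v => Dn N (r + 1 + 1) a v) := by
      intro he
      have := hF (F.filter (fun v => Dn N (r + 1) a v)) (Finset.filter_subset _ _)
        (Finset.card_pos.1 (by omega)) (by
          intro x hx u hu hnu
          by_contra hcon
          apply hnu
          rw [he]
          rw [Finset.mem_filter] at hx ⊢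
          exact ⟨hu, x, hx.2, hcon⟩)
      rw [← this, he, Finset.mem_filter] at hv
      exact hd hv.2
    have := Finset.card_lt_card (lt_of_le_of_ne hsub hne)
    omega

open scoped Classical in
lemma step {V W : Type*} {N : V → Finset W} (hN : ∀ v, (N v).Nonempty) {n : ℕ} {P A : Set V}
    {U : Set W} (O : V → Set V) (hOa : ∀ a, a ∈ O a)
    (hO : ∀ a v u, v ∈ O a → ¬ Disjoint (N v) (N u) → u ∈ O a)
    (hinv : HInv N n P U) (hA : Sparse N (2 ^ (n + 1)) A) (y : V → W)
    (hyN : ∀ a ∈ P ∩ A, y a ∈ N a)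
    (hyH : ∀ a ∈ P ∩ A, HHall N ((P \ {a}) ∩ O a) (insert (y a) U)) :
    HInv N (n + 1) (P \ A) (U ∪ y '' (P ∩ A)) := by
  intro F hF hs
  have hinvF := hinv F (fun v hv => (hF v hv).1) hs
  -- the removed set
  set Q : Finset W := (FN N U F).filter (fun w => w ∈ y '' (P ∩ A)) with hQ
  have hFN : FN N (U ∪ y '' (P ∩ A)) F = FN N U F \ Q := by
    ext w
    simp only [hQ, Finset.mem_sdiff, Finset.mem_filter, mem_FN, Set.mem_union]
    generalize (∃ v ∈ F, w ∈ N v) = p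
    generalize (w ∈ y '' (P ∩ A)) = q
    tauto
  have hQsub : Q ⊆ FN N U F := Finset.filter_subset _ _
  have hcard : (FN N (U ∪ y '' (P ∩ A)) F).card + Q.card = (FN N U F).card := by
    rw [hFN]; exact Finset.card_sdiff_add_card_eq_card hQsub
  have hpick : ∀ w, w ∈ Q → ∃ a, a ∈ P ∩ A ∧ y a = w ∧ ∃ v ∈ F, ¬ Disjoint (N a) (N v) := by
    intro w hw
    rw [hQ, Finset.mem_filter, mem_FN] at hw
    obtain ⟨⟨⟨v, hv, hwv⟩, _⟩, a, ha, rfl⟩ := hw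
    exact ⟨a, ha, rfl, v, hv, fun hd => Finset.disjoint_left.1 hd (hyN a ha) hwv⟩
  have hd2 : 2 * (F.card / 2 ^ (n + 1)) ≤ F.card / 2 ^ n := by
    rw [pow_succ, ← Nat.div_div_eq_div_mul]
    omega
  rcases Nat.lt_or_ge Q.card 2 with hk | hk
  · rcases Nat.eq_zero_or_pos (F.card / 2 ^ (n + 1)) with h0 | h0
    · rw [h0]
      rcases Nat.eq_zero_or_pos Q.card with hq | hq
      · omega
      · obtain ⟨w, hw⟩ := Finset.card_pos.1 hq
        obtain ⟨a, ha, hya, v, hv, hav⟩ := hpick w hw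
        have hvO : v ∈ O a := hO a a v (hOa a) hav
        have hFO : F.filter (fun u => u ∈ O a) = F := by
          refine hs _ (Finset.filter_subset _ _) ⟨v, Finset.mem_filter.2 ⟨hv, hvO⟩⟩ ?_
          intro x hx u hu hnu
          by_contra hcon
          rw [Finset.mem_filter] at hx hnu
          exact hnu ⟨hu, hO a x u hx.2 hcon⟩
        have := hyH a ha F (by
          intro u hu
          refine ⟨⟨(hF u hu).1, ?_⟩, ?_⟩
          · rintro rfl
            exact (hF _ hu).2 ha.2
          · rw [← hFO, Finset.mem_filter] at hu
            exact hu.2)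
        refine le_trans (by simpa using this) (Finset.card_le_card ?_)
        intro z hz
        rw [mem_FN] at hz ⊢
        refine ⟨hz.1, ?_⟩
        rintro (hzU | hzy)
        · exact hz.2 (Or.inr hzU)
        · have hzQ : z ∈ Q := by
            rw [hQ, Finset.mem_filter, mem_FN]
            exact ⟨⟨hz.1, fun h => hz.2 (Or.inr h)⟩, hzy⟩
          have : z = w := Finset.card_le_one.1 (by omega) z hzQ w hw
          exact hz.2 (Or.inl (this.trans hya.symm))
    · omega
  · have : Q.card * 2 ^ (n + 1) ≤ F.card := by
      have : Nonempty V := by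
        obtain ⟨w, hw⟩ := Finset.card_pos.1 (show 0 < Q.card by omega)
        exact ⟨(hpick w hw).choose⟩
      choose! f hf1 hf2 hf3 using hpick
      have hfinj : ∀ w ∈ Q, ∀ w' ∈ Q, f w = f w' → w = w' := by
        intro w hw w' hw' h
        rw [← hf2 w hw, ← hf2 w' hw', h]
      have hpos : 0 < 2 ^ (n + 1) := by positivity
      obtain ⟨r, hr⟩ : ∃ r, 2 ^ (n + 1) = r + 1 := ⟨2 ^ (n + 1) - 1, by omega⟩
      have hone : ∀ w ∈ Q, ∃ v ∈ F, Dn N 1 (f w) v := by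
        intro w hw
        obtain ⟨v, hv, hd⟩ := hf3 w hw
        exact ⟨v, hv, f w, rfl, hd⟩
      have mono : ∀ a s v, Dn N s a v → Dn N (s + 1) a v := by
        intro a s v hv
        refine ⟨v, hv, ?_⟩
        rw [disjoint_self]
        exact (hN v).ne_empty
      have mono1 : ∀ a s v, Dn N 1 a v → Dn N (s + 1) a v := by
        intro a s v hv
        induction s with
        | zero => exact hv
        | succ s ih => exact mono _ _ _ ih
      rw [hr] at hA ⊢
      have hsm : ∀ w ∈ Q, r + 1 ≤ (F.filter (fun v => Dn N (r + 1) (f w) v)).card := by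
        intro w hw
        apply ball_card hN hs _ (hone w hw)
        obtain ⟨w', hw', hne⟩ := Finset.exists_mem_ne (s := Q) (by omega) w
        obtain ⟨v, hv, hd⟩ := hone w' hw'
        refine ⟨v, hv, fun h => hne ?_⟩
        exact hfinj _ hw' _ hw (hA _ (hf1 _ hw').2 _ (hf1 _ hw).2 v (mono1 _ _ _ hd) h)
      calc Q.card * (r + 1) ≤ ∑ w ∈ Q, (F.filter (fun v => Dn N (r + 1) (f w) v)).card := by
            rw [← smul_eq_mul]
            exact Finset.card_nsmul_le_sum _ _ _ hsm
        _ = (Q.biUnion (fun w => F.filter (fun v => Dn N (r + 1) (f w) v))).card := by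
            rw [Finset.card_biUnion]
            intro w hw w' hw' hne
            rw [Function.onFun, Finset.disjoint_left]
            intro v hv hv'
            rw [Finset.mem_filter] at hv hv'
            exact hne (hfinj _ hw _ hw' (hA _ (hf1 _ hw).2 _ (hf1 _ hw').2 v hv.2 hv'.2))
        _ ≤ F.card := by
            apply Finset.card_le_card
            intro v hv
            rw [Finset.mem_biUnion] at hv
            obtain ⟨w, _, hv⟩ := hv
            exact (Finset.mem_filter.1 hv).1
    have := (Nat.le_div_iff_mul_le (by positivity)).2 this
    omega

open scoped Classical in
/-- neighbours -/
noncomputable def NB {Γ X : Type*} [Group Γ] [MulAction Γ X] (S : Finset Γ) (v : X × Bool) :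
    Finset X := S.image (fun s => s • v.1)

lemma mem_NB {Γ X : Type*} [Group Γ] [MulAction Γ X] {S : Finset Γ} {v : X × Bool} {x : X} :
    x ∈ NB S v ↔ ∃ s ∈ S, s • v.1 = x := by
  classical
  simp [NB]

def OB (Γ : Type*) {X : Type*} [Group Γ] [MulAction Γ X] (v : X × Bool) : Set (X × Bool) :=
  {u | ∃ g : Γ, u.1 = g • v.1}

lemma OB_sat {Γ X : Type*} [Group Γ] [MulAction Γ X] {S : Finset Γ} (a v u : X × Bool)
    (hv : v ∈ OB Γ a) (h : ¬ Disjoint (NB S v) (NB S u)) : u ∈ OB Γ a := by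
  classical
  rw [Finset.not_disjoint_iff] at h
  obtain ⟨x, h1, h2⟩ := h
  rw [mem_NB] at h1 h2
  obtain ⟨s, _, h1⟩ := h1
  obtain ⟨t, _, h2⟩ := h2
  obtain ⟨g, hg⟩ := hv
  refine ⟨t⁻¹ * s * g, ?_⟩
  rw [mul_smul, mul_smul, ← hg, h1, ← h2, inv_smul_smul]

open scoped Classical in
lemma hall_iff {Γ X : Type*} [Group Γ] [MulAction Γ X] (S : Finset Γ) (P : Set (X × Bool))
    (U : Set X) (v : X × Bool) (s : Γ) :
    HHall (NB (X := X) S) ((P \ {v}) ∩ OB Γ v) (insert (s • v.1) U) ↔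
    ∀ K : Finset (Γ × Bool), (∀ k, k ∈ K → (k.1 • v.1, k.2) ∈ P ∧ ¬ (k.1 • v.1, k.2) = v) →
      (∀ k, k ∈ K → ∀ k', k' ∈ K → k ≠ k' → ¬ (k.1 • v.1, k.2) = (k'.1 • v.1, k'.2)) →
      ∃ L : Finset Γ, (∀ l, l ∈ L → ∃ t ∈ S, ∃ k ∈ K, l = t * k.1) ∧ K.card ≤ L.card ∧
        (∀ l, l ∈ L → ¬ l • v.1 ∈ U ∧ ¬ l • v.1 = s • v.1) ∧
        (∀ l, l ∈ L → ∀ l', l' ∈ L → l ≠ l' → ¬ l • v.1 = l' • v.1) := by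
  constructor
  · intro h K hK1 hK2
    have h1 := h (K.image (fun k => (k.1 • v.1, k.2))) (by
      intro u hu
      rw [Finset.mem_image] at hu
      obtain ⟨k, hk, rfl⟩ := hu
      exact ⟨⟨(hK1 k hk).1, (hK1 k hk).2⟩, k.1, rfl⟩)
    rw [Finset.card_image_of_injOn (by
      intro k hk k' hk' he
      by_contra hne
      exact hK2 k hk k' hk' hne he)] at h1
    have h2 : ∀ w ∈ FN (NB (X := X) S) (insert (s • v.1) U) (K.image (fun k => (k.1 • v.1, k.2))),
        ∃ l : Γ, l • v.1 = w ∧ ∃ t ∈ S, ∃ k ∈ K, l = t * k.1 := by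
      intro w hw
      rw [mem_FN] at hw
      obtain ⟨⟨u, hu, hwu⟩, _⟩ := hw
      rw [Finset.mem_image] at hu
      obtain ⟨k, hk, rfl⟩ := hu
      rw [mem_NB] at hwu
      obtain ⟨t, ht, rfl⟩ := hwu
      exact ⟨t * k.1, mul_smul _ _ _, t, ht, k, hk, rfl⟩
    choose! f hf1 hf2 using h2
    refine ⟨(FN (NB (X := X) S) (insert (s • v.1) U) (K.image (fun k => (k.1 • v.1, k.2)))).image f,
      ?_, ?_, ?_, ?_⟩
    · intro l hl
      rw [Finset.mem_image] at hl
      obtain ⟨w, hw, rfl⟩ := hl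
      exact hf2 w hw
    · rw [Finset.card_image_of_injOn]
      · exact h1
      · intro w hw w' hw' he
        rw [← hf1 w hw, ← hf1 w' hw', he]
    · intro l hl
      rw [Finset.mem_image] at hl
      obtain ⟨w, hw, rfl⟩ := hl
      rw [hf1 w hw]
      have := (mem_FN.1 hw).2
      exact ⟨fun h => this (Or.inr h), fun h => this (Or.inl h)⟩
    · intro l hl l' hl' hne
      rw [Finset.mem_image] at hl hl'
      obtain ⟨w, hw, rfl⟩ := hl
      obtain ⟨w', hw', rfl⟩ := hl'
      rw [hf1 w hw, hf1 w' hw']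
      rintro rfl
      exact hne rfl
  · intro h F hF
    have h2 : ∀ u : X × Bool, u ∈ F → ∃ g : Γ, u.1 = g • v.1 := fun u hu => (hF u hu).2
    choose! f hf using h2
    obtain ⟨L, hL1, hL2, hL3, hL4⟩ := h (F.image (fun u => (f u, u.2))) (by
      intro k hk
      rw [Finset.mem_image] at hk
      obtain ⟨u, hu, rfl⟩ := hk
      have : (f u • v.1, u.2) = u := by rw [← hf u hu]
      dsimp only
      rw [this]
      exact (hF u hu).1) (by
      intro k hk k' hk' hne he
      rw [Finset.mem_image] at hk hk'
      obtain ⟨u, hu, rfl⟩ := hk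
      obtain ⟨u', hu', rfl⟩ := hk'
      dsimp only at he
      rw [← hf u hu, ← hf u' hu'] at he
      have : u = u' := he
      rw [this] at hne
      exact hne rfl)
    rw [Finset.card_image_of_injOn (by
      intro u hu u' hu' he
      rw [Prod.mk.injEq] at he
      refine Prod.ext ?_ he.2
      rw [hf u hu, hf u' hu', he.1])] at hL2
    refine hL2.trans (Finset.card_le_card_of_injOn (fun l => l • v.1) ?_ ?_)
    · intro l hl
      obtain ⟨t, ht, k, hk, rfl⟩ := hL1 l hl
      have h3 := hL3 _ hl
      rw [Finset.mem_coe, mem_FN]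
      rw [Finset.mem_image] at hk
      obtain ⟨u, hu, rfl⟩ := hk
      refine ⟨⟨u, hu, ?_⟩, ?_⟩
      · rw [mem_NB]
        refine ⟨t, ht, ?_⟩
        rw [hf u hu]
        exact (mul_smul _ _ _).symm
      · rintro (h | h)
        · exact h3.2 h
        · exact h3.1 h
    · intro l hl l' hl' he
      by_contra hne
      exact hL4 l hl l' hl' hne he

lemma hall_meas {Γ X : Type*} [Group Γ] [Countable Γ] [MulAction Γ X] [MeasurableSpace X]
    [MeasurableEq X]
    (hact : ∀ γ : Γ, Measurable (fun x : X => γ • x)) (S : Finset Γ) (P : Set (X × Bool))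
    (hP : MeasurableSet P) (U : Set X) (hU : MeasurableSet U) (s : Γ) :
    MeasurableSet {v : X × Bool | HHall (NB (X := X) S) ((P \ {v}) ∩ OB Γ v) (insert (s • v.1) U)} := by
  simp only [hall_iff]
  have m1 : ∀ k : Γ × Bool, Measurable (fun v : X × Bool => (k.1 • v.1, k.2)) := fun k =>
    ((hact k.1).comp measurable_fst).prodMk measurable_const
  have m2 : ∀ k : Γ, Measurable (fun v : X × Bool => k • v.1) := fun k =>
    (hact k).comp measurable_fst
  have me : ∀ k l : Γ, MeasurableSet {v : X × Bool | k • v.1 = l • v.1} := fun k l =>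
    measurableSet_eq_fun (m2 k) (m2 l)
  have me1 : ∀ k l : Γ × Bool, MeasurableSet {v : X × Bool | (k.1 • v.1, k.2) = (l.1 • v.1, l.2)} := by
    intro k l
    simp only [Prod.mk.injEq]
    exact (me _ _).inter (MeasurableSet.const _)
  have me2 : ∀ k : Γ × Bool, MeasurableSet {v : X × Bool | (k.1 • v.1, k.2) = v} := by
    intro k
    simp only [Prod.ext_iff]
    exact (measurableSet_eq_fun (m2 k.1) measurable_fst).inter
      (measurableSet_eq_fun measurable_const measurable_snd)
  rw [measurableSet_setOfPred]
  refine Measurable.forall fun K => Measurable.imp ?_ (Measurable.imp ?_ (Measurable.exists fun L =>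
    Measurable.and measurable_const (Measurable.and measurable_const (Measurable.and ?_ ?_))))
  · refine Measurable.forall fun k => Measurable.imp measurable_const (Measurable.and ?_ ?_)
    · exact measurableSet_setOfPred.1 ((m1 k) hP)
    · exact (measurableSet_setOfPred.1 (me2 k)).not
  · refine Measurable.forall fun k => Measurable.imp measurable_const (Measurable.forall fun k' =>
      Measurable.imp measurable_const (Measurable.imp measurable_const ?_))
    exact (measurableSet_setOfPred.1 (me1 k k')).not
  · refine Measurable.forall fun k => Measurable.imp measurable_const (Measurable.and ?_ ?_)
    · exact (measurableSet_setOfPred.1 ((m2 k) hU)).not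
    · exact (measurableSet_setOfPred.1 (me k s)).not
  · refine Measurable.forall fun k => Measurable.imp measurable_const (Measurable.forall fun k' =>
      Measurable.imp measurable_const (Measurable.imp measurable_const ?_))
    exact (measurableSet_setOfPred.1 (me k k')).not

open scoped Classical in
lemma select {G V : Type*} [MeasurableSpace V] (Good : G → Set V)
    (hG : ∀ g, MeasurableSet (Good g)) (S : Finset G) (hS : S.Nonempty) :
    ∃ c : V → G, (∀ v, c v ∈ S) ∧ (∀ g, MeasurableSet {v | c v = g}) ∧
      ∀ v, (∃ s ∈ S, v ∈ Good s) → v ∈ Good (c v) := by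
  induction hS using Finset.Nonempty.cons_induction with
  | singleton a =>
    refine ⟨fun _ => a, by simp, fun g => MeasurableSet.const _, ?_⟩
    rintro v ⟨s, hs, hv⟩
    rw [Finset.mem_singleton] at hs
    exact hs ▸ hv
  | cons a S ha hS ih =>
    obtain ⟨c, h1, h2, h3⟩ := ih
    refine ⟨fun v => if v ∈ Good a then a else c v, ?_, ?_, ?_⟩
    · intro v
      dsimp only
      split_ifs
      · exact Finset.mem_cons_self _ _
      · exact Finset.mem_cons_of_mem (h1 v)
    · intro g
      have : {v | (if v ∈ Good a then a else c v) = g} =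
          (Good a ∩ {_v | a = g}) ∪ ((Good a)ᶜ ∩ {v | c v = g}) := by
        ext v
        simp only [Set.mem_ofPred_eq, Set.mem_union, Set.mem_inter_iff, Set.mem_compl_iff]
        split_ifs with h <;> simp [h]
      rw [this]
      exact ((hG a).inter (MeasurableSet.const _)).union ((hG a).compl.inter (h2 g))
    · rintro v ⟨s, hs, hv⟩
      dsimp only
      split_ifs with h
      · exact h
      · apply h3
        rw [Finset.mem_cons] at hs
        rcases hs with rfl | hs
        · exact absurd hv h
        · exact ⟨s, hs, hv⟩

lemma img_meas {Γ X : Type*} [Group Γ] [MulAction Γ X] [MeasurableSpace X]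
    (hact : ∀ γ : Γ, Measurable (fun x : X => γ • x)) (S : Finset Γ) (c : X → Γ)
    (hcS : ∀ x, c x ∈ S) (hc : ∀ g, MeasurableSet {x | c x = g}) (Y : Set X)
    (hY : MeasurableSet Y) : MeasurableSet ((fun x => c x • x) '' Y) := by
  have : (fun x => c x • x) '' Y =
      ⋃ s ∈ S, (fun x => s⁻¹ • x) ⁻¹' (Y ∩ {x | c x = s}) := by
    ext z
    simp only [Set.mem_image, Set.mem_iUnion, Set.mem_preimage, Set.mem_inter_iff,
      Set.mem_ofPred_eq, exists_prop]
    constructor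
    · rintro ⟨x, hx, rfl⟩
      exact ⟨c x, hcS x, by rwa [inv_smul_smul], by rw [inv_smul_smul]⟩
    · rintro ⟨s, hs, h1, h2⟩
      exact ⟨_, h1, by rw [h2, smul_inv_smul]⟩
  rw [this]
  exact Finset.measurableSet_biUnion _ fun s _ => hact _ (hY.inter (hc s))

lemma stage {Γ X : Type*} [Group Γ] [Countable Γ] [MulAction Γ X] [MeasurableSpace X]
    [MeasurableEq X]
    (hact : ∀ γ : Γ, Measurable (fun x : X => γ • x)) (S : Finset Γ) (hS : S.Nonempty)
    (n : ℕ) (P A : Set (X × Bool))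
    (hP : MeasurableSet P) (hA : MeasurableSet A) (U : Set X) (hU : MeasurableSet U)
    (hinv : HInv (NB (X := X) S) n P U) (hsp : Sparse (NB (X := X) S) (2 ^ (n + 1)) A) :
    ∃ c : X × Bool → Γ, (∀ v, c v ∈ S) ∧ (∀ g, MeasurableSet {v | c v = g}) ∧
      (∀ v ∈ P ∩ A, c v • v.1 ∉ U) ∧ Set.InjOn (fun v : X × Bool => c v • v.1) (P ∩ A) ∧
      MeasurableSet (U ∪ (fun v : X × Bool => c v • v.1) '' (P ∩ A)) ∧
      HInv (NB (X := X) S) (n + 1) (P \ A) (U ∪ (fun v : X × Bool => c v • v.1) '' (P ∩ A)) := by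
  classical
  have hNne : ∀ v : X × Bool, (NB S v).Nonempty := fun v => hS.image _
  obtain ⟨c, c1, c2, c3⟩ := select (fun s : Γ => {v : X × Bool | s • v.1 ∉ U} ∩
    {v : X × Bool | HHall (NB (X := X) S) ((P \ {v}) ∩ OB Γ v) (insert (s • v.1) U)})
    (fun s => (((hact s).comp measurable_fst) hU).compl.inter (hall_meas hact S P hP U hU s)) S hS
  have c4 : ∀ v ∈ P, c v • v.1 ∉ U ∧
      HHall (NB (X := X) S) ((P \ {v}) ∩ OB Γ v) (insert (c v • v.1) U) := by
    intro v hv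
    apply c3 v
    obtain ⟨y, hy, hyU, hyH⟩ := hinv.hall.pick hv
    rw [mem_NB] at hy
    obtain ⟨s, hs, rfl⟩ := hy
    exact ⟨s, hs, hyU, fun F hF => hyH F fun u hu => (hF u hu).1⟩
  have hmem : ∀ v : X × Bool, c v • v.1 ∈ NB S v := fun v => mem_NB.2 ⟨c v, c1 v, rfl⟩
  refine ⟨c, c1, c2, fun v hv => (c4 v hv.1).1, ?_, ?_, ?_⟩
  · intro v hv u hu he
    have mono : ∀ a s v, Dn (NB (X := X) S) s a v → Dn (NB (X := X) S) (s + 1) a v := by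
      intro a s v hv
      refine ⟨v, hv, ?_⟩
      rw [disjoint_self]
      exact (hNne v).ne_empty
    have mono1 : ∀ a s v, Dn (NB (X := X) S) 1 a v → Dn (NB (X := X) S) (s + 1) a v := by
      intro a s v hv
      induction s with
      | zero => exact hv
      | succ s ih => exact mono _ _ _ ih
    have hpos : 0 < 2 ^ (n + 1) := by positivity
    obtain ⟨r, hr⟩ : ∃ r, 2 ^ (n + 1) = r + 1 := ⟨2 ^ (n + 1) - 1, by omega⟩
    rw [hr] at hsp
    apply hsp v hv.2 u hu.2 u
    · apply mono1
      refine ⟨v, rfl, fun hd => Finset.disjoint_left.1 hd (hmem v) ?_⟩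
      dsimp only at he
      rw [he]
      exact hmem u
    · apply mono1
      refine ⟨u, rfl, fun hd => Finset.disjoint_left.1 hd (hmem u) (hmem u)⟩
  · have : (fun v : X × Bool => c v • v.1) '' (P ∩ A) =
      ⋃ b : Bool, (fun x => c (x, b) • x) '' ((fun x => (x, b)) ⁻¹' (P ∩ A)) := by
      ext z
      simp only [Set.mem_image, Set.mem_iUnion, Set.mem_preimage]
      constructor
      · rintro ⟨⟨x, b⟩, hv, rfl⟩
        exact ⟨b, x, hv, rfl⟩
      · rintro ⟨b, x, hv, rfl⟩
        exact ⟨(x, b), hv, rfl⟩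
    rw [this]
    have mb : ∀ b : Bool, Measurable (fun x : X => (x, b)) := fun b =>
      measurable_id.prodMk measurable_const
    exact hU.union (MeasurableSet.iUnion fun b => img_meas hact S (fun x => c (x, b))
      (fun x => c1 _) (fun g => mb b (c2 g)) _ (mb b (hP.inter hA)))
  · exact step hNne (OB Γ) (fun a => ⟨1, (one_smul _ _).symm⟩) OB_sat hinv hsp _
      (fun a _ => hmem a) (fun a ha => (c4 a ha.1).2)

open scoped Classical in
lemma limit_matching {Γ X : Type*} [Group Γ] [Countable Γ] [MulAction Γ X] [MeasurableSpace X]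
    [MeasurableEq X]
    (hact : ∀ γ : Γ, Measurable (fun x : X => γ • x)) (S : Finset Γ) (hS : S.Nonempty)
    (A : ℕ → Set (X × Bool)) (hA : ∀ n, MeasurableSet (A n))
    (hsp : ∀ n, Sparse (NB (X := X) S) (2 ^ (n + 1)) (A n)) (hinv : HInv (NB (X := X) S) 0 Set.univ ∅) :
    ∃ c : X × Bool → Γ, (∀ v, c v ∈ S) ∧ (∀ g, MeasurableSet {v | c v = g}) ∧
      Set.InjOn (fun v : X × Bool => c v • v.1) (⋃ n, A n) := by
  set P : ℕ → Set (X × Bool) := fun n => (⋃ m, ⋃ (_ : m < n), A m)ᶜ with hPdef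
  have hP : ∀ n, MeasurableSet (P n) := fun n =>
    (MeasurableSet.iUnion fun m => MeasurableSet.iUnion fun _ => hA m).compl
  have hPs : ∀ n, P (n + 1) = P n \ A n := by
    intro n
    ext v
    simp only [hPdef, Set.mem_compl_iff, Set.mem_iUnion, Set.mem_sdiff, not_exists, exists_prop,
      not_and, Order.lt_add_one_iff]
    constructor
    · intro h
      exact ⟨fun m hm => h m hm.le, h n le_rfl⟩
    · rintro ⟨h1, h2⟩ m hm
      rcases hm.lt_or_eq with h | rfl
      · exact h1 m h
      · exact h2
  have hP0 : P 0 = Set.univ := by simp [hPdef]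
  let St : ℕ → Type _ := fun n => {U : Set X // MeasurableSet U ∧ HInv (NB (X := X) S) n (P n) U}
  have hst : ∀ n (U : St n), ∃ c : X × Bool → Γ, (∀ v, c v ∈ S) ∧
      (∀ g, MeasurableSet {v | c v = g}) ∧
      (∀ v ∈ P n ∩ A n, c v • v.1 ∉ U.1) ∧ Set.InjOn (fun v : X × Bool => c v • v.1) (P n ∩ A n) ∧
      MeasurableSet (U.1 ∪ (fun v : X × Bool => c v • v.1) '' (P n ∩ A n)) ∧
      HInv (NB (X := X) S) (n + 1) (P (n + 1)) (U.1 ∪ (fun v : X × Bool => c v • v.1) '' (P n ∩ A n)) := by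
    intro n U
    rw [hPs]
    exact stage hact S hS n (P n) (A n) (hP n) (hA n) U.1 U.2.1 U.2.2 (hsp n)
  choose C hC1 hC2 hC3 hC4 hC5 hC6 using hst
  let U : (n : ℕ) → St n := fun n => Nat.rec
    ⟨∅, MeasurableSet.empty, by rw [hP0]; exact hinv⟩
    (fun n U => ⟨U.1 ∪ (fun v : X × Bool => C n U v • v.1) '' (P n ∩ A n), hC5 n U, hC6 n U⟩) n
  have hUs : ∀ n, (U (n + 1)).1 = (U n).1 ∪ (fun v : X × Bool => C n (U n) v • v.1) '' (P n ∩ A n) :=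
    fun n => rfl
  have hUmono : Monotone (fun n => (U n).1) := monotone_nat_of_le_succ fun n => by
    rw [hUs]; exact Set.subset_union_left
  obtain ⟨s0, hs0⟩ := hS
  have hfind : ∀ v (h : ∃ n, v ∈ A n), v ∈ P (Nat.find h) ∩ A (Nat.find h) := by
    intro v h
    refine ⟨?_, Nat.find_spec h⟩
    simp only [hPdef, Set.mem_compl_iff, Set.mem_iUnion, not_exists]
    intro m hm
    exact Nat.find_min h hm
  have huniq : ∀ v n m, v ∈ P n ∩ A n → v ∈ P m ∩ A m → n ≤ m := by
    intro v n m h1 h2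
    by_contra hlt
    push Not at hlt
    apply h1.1
    simp only [Set.mem_iUnion]
    exact ⟨m, hlt, h2.2⟩
  let c : X × Bool → Γ := fun v => if h : ∃ n, v ∈ A n then C (Nat.find h) (U (Nat.find h)) v else s0
  have hc : ∀ n v, v ∈ P n ∩ A n → c v = C n (U n) v := by
    intro n v hv
    have h : ∃ n, v ∈ A n := ⟨n, hv.2⟩
    have he : Nat.find h = n := le_antisymm (huniq v _ _ (hfind v h) hv) (huniq v _ _ hv (hfind v h))
    simp only [c, dif_pos h]
    rw [he]
  have hc0 : ∀ v, (¬ ∃ n, v ∈ A n) → c v = s0 := fun v h => dif_neg h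
  refine ⟨c, ?_, ?_, ?_⟩
  · intro v
    by_cases h : ∃ n, v ∈ A n
    · rw [hc _ v (hfind v h)]; exact hC1 _ _ _
    · rw [hc0 v h]; exact hs0
  · intro g
    have : {v | c v = g} = (⋃ n, (P n ∩ A n) ∩ {v | C n (U n) v = g}) ∪
        ((⋃ n, A n)ᶜ ∩ {_v | s0 = g}) := by
      ext v
      simp only [Set.mem_ofPred_eq, Set.mem_union, Set.mem_iUnion]
      by_cases h : ∃ n, v ∈ A n
      · constructor
        · intro hv
          refine Or.inl ⟨_, hfind v h, ?_⟩
          rw [Set.mem_ofPred_eq, ← hc _ v (hfind v h), hv]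
        · rintro (⟨n, h1, h2⟩ | ⟨h1, _⟩)
          · rw [hc n v h1]; exact h2
          · exact absurd (Set.mem_iUnion.2 h) h1
      · rw [hc0 v h]
        constructor
        · intro hv
          exact Or.inr ⟨fun h' => h (Set.mem_iUnion.1 h'), hv⟩
        · rintro (⟨n, h1, h2⟩ | ⟨_, h1⟩)
          · exact absurd ⟨n, h1.2⟩ h
          · exact h1
    rw [this]
    exact (MeasurableSet.iUnion fun n => ((hP n).inter (hA n)).inter (hC2 n (U n) g)).union
      ((MeasurableSet.iUnion hA).compl.inter (MeasurableSet.const _))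
  · have key : ∀ n m v u, n < m → v ∈ P n ∩ A n → u ∈ P m ∩ A m → c v • v.1 ≠ c u • u.1 := by
      intro n m v u hnm hv hu he
      rw [hc n v hv, hc m u hu] at he
      apply hC3 m (U m) u hu
      rw [← he]
      apply hUmono (Nat.succ_le_of_lt hnm)
      dsimp only
      rw [Nat.succ_eq_add_one, hUs]
      exact Or.inr ⟨v, hv, rfl⟩
    intro v hv u hu he
    have hv' := hfind v (Set.mem_iUnion.1 hv)
    have hu' := hfind u (Set.mem_iUnion.1 hu)
    generalize Nat.find (Set.mem_iUnion.1 hv) = n at hv'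
    generalize Nat.find (Set.mem_iUnion.1 hu) = m at hu'
    dsimp only at he
    rcases lt_trichotomy n m with h | h | h
    · exact absurd he (key n m v u h hv' hu')
    · subst h
      rw [hc n v hv', hc n u hu'] at he
      exact hC4 n (U n) hv' hu' he
    · exact absurd he.symm (key m n u v h hu' hv')

lemma hinv_zero {Γ X : Type*} [Group Γ] [MulAction Γ X] (S T : Finset Γ)
    (hST : ∀ t ∈ T, ∀ t' ∈ T, t * t' ∈ S) (d : X × Bool → Γ) (hd : ∀ v, d v ∈ T)
    (hinj : Function.Injective (fun v : X × Bool => d v • v.1)) :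
    HInv (NB (X := X) S) 0 Set.univ ∅ := by
  classical
  intro F _ _
  have h1 : (F ×ˢ (Finset.univ : Finset Bool)).card ≤ (FN (NB (X := X) S) ∅ F).card := by
    refine Finset.card_le_card_of_injOn
      (fun p : (X × Bool) × Bool => d (d p.1 • p.1.1, p.2) • (d p.1 • p.1.1)) ?_ ?_
    · rintro ⟨v, b⟩ hp
      rw [Finset.mem_coe, Finset.mem_product] at hp
      rw [Finset.mem_coe, mem_FN]
      refine ⟨⟨v, hp.1, mem_NB.2 ⟨_, hST _ (hd _) _ (hd _), mul_smul _ _ _⟩⟩, id⟩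
    · rintro ⟨v, b⟩ _ ⟨u, b'⟩ _ he
      have h2 := hinj (a₁ := (d v • v.1, b)) (a₂ := (d u • u.1, b')) he
      rw [Prod.mk.injEq] at h2
      have h3 := hinj h2.1
      rw [h3, h2.2]
  rw [Finset.card_product, Finset.card_univ, Fintype.card_bool] at h1
  rw [pow_zero, Nat.div_one]
  omega

lemma dn_finite {Γ X : Type*} [Group Γ] [MulAction Γ X] (S : Finset Γ) (r : ℕ) :
    ∃ J : Finset Γ, ∀ a v : X × Bool, Dn (NB (X := X) S) r a v → ∃ j ∈ J, v.1 = j • a.1 := by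
  classical
  induction r with
  | zero =>
    refine ⟨{1}, ?_⟩
    rintro a v rfl
    exact ⟨1, Finset.mem_singleton_self _, (one_smul _ _).symm⟩
  | succ r ih =>
    obtain ⟨J, hJ⟩ := ih
    refine ⟨((S ×ˢ S) ×ˢ J).image (fun p => p.1.1⁻¹ * p.1.2 * p.2), ?_⟩
    rintro a v ⟨u, hu, hd⟩
    obtain ⟨j, hj, huj⟩ := hJ a u hu
    rw [Finset.not_disjoint_iff] at hd
    obtain ⟨x, h1, h2⟩ := hd
    rw [mem_NB] at h1 h2
    obtain ⟨s, hs, h1⟩ := h1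
    obtain ⟨t, ht, h2⟩ := h2
    refine ⟨t⁻¹ * s * j, Finset.mem_image.2 ⟨((t, s), j), ?_, rfl⟩, ?_⟩
    · simp [hs, ht, hj]
    · rw [mul_smul, mul_smul, ← huj, h1, ← h2, inv_smul_smul]

lemma sparse_of {Γ X : Type*} [Group Γ] [MulAction Γ X] (S : Finset Γ) (r : ℕ) :
    ∃ E : Finset Γ, ∀ (B : Set X) (b : Bool), (∀ x ∈ B, ∀ e ∈ E, e • x ∈ B → e • x = x) →
      Sparse (NB (X := X) S) r {v : X × Bool | v.1 ∈ B ∧ v.2 = b} := by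
  classical
  obtain ⟨J, hJ⟩ := dn_finite (X := X) S r
  refine ⟨(J ×ˢ J).image (fun p => p.1⁻¹ * p.2), ?_⟩
  intro B b hB a ha a' ha' u h1 h2
  obtain ⟨j, hj, e1⟩ := hJ a u h1
  obtain ⟨j', hj', e2⟩ := hJ a' u h2
  have e3 : (j'⁻¹ * j) • a.1 = a'.1 := by
    rw [mul_smul, ← e1, e2, inv_smul_smul]
  have := hB a.1 ha.1 (j'⁻¹ * j) (Finset.mem_image.2 ⟨(j', j), by simp [hj, hj'], rfl⟩)
    (by rw [e3]; exact ha'.1)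
  rw [e3] at this
  exact Prod.ext this.symm (ha.2.trans ha'.2.symm)

lemma sparse_cover {Γ X : Type*} [Group Γ] [MulAction Γ X] [TopologicalSpace X] [T1Space X]
    (b : Set (Set X)) (hb : TopologicalSpace.IsTopologicalBasis b) (E : Finset Γ) (x : X) :
    ∃ O ∈ b, x ∈ O ∧ ∀ e ∈ E, e • x ∈ O → e • x = x := by
  classical
  have hfin : Set.Finite {y : X | (∃ e ∈ E, e • x = y) ∧ y ≠ x} :=
    (E.finite_toSet.image (fun e => e • x)).subset (by
      rintro y ⟨⟨e, he, rfl⟩, _⟩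
      exact ⟨e, he, rfl⟩)
  obtain ⟨O, hO, hxO, hsub⟩ := hb.exists_subset_of_mem_open
    (show x ∈ {y : X | (∃ e ∈ E, e • x = y) ∧ y ≠ x}ᶜ from fun h => h.2 rfl)
    hfin.isClosed.isOpen_compl
  refine ⟨O, hO, hxO, fun e he heO => ?_⟩
  by_contra hne
  exact hsub heO ⟨⟨e, he, rfl⟩, hne⟩

lemma residual_of_nonmeagre {X : Type*} [TopologicalSpace X] [BaireSpace X]
    (b : Set (Set X)) (hb : TopologicalSpace.IsTopologicalBasis b) (C : Set X)
    (hC : BaireMeasurableSet C)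
    (h : ∀ O ∈ b, O.Nonempty → ¬ IsMeagre (O ∩ C)) : C ∈ residual X := by
  obtain ⟨u, hu, he⟩ := hC.compl.residualEq_isOpen
  have h2 : {x | x ∈ Cᶜ ↔ x ∈ u} ∈ residual X := Filter.eventuallyEq_set.1 he
  rcases u.eq_empty_or_nonempty with rfl | ⟨x, hx⟩
  · filter_upwards [h2] with x hx
    by_contra hxC
    exact hx.1 hxC
  · exfalso
    obtain ⟨O, hO, hxO, hsub⟩ := hb.exists_subset_of_mem_open hx hu
    apply h O hO ⟨x, hxO⟩
    change (O ∩ C)ᶜ ∈ residual X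
    filter_upwards [h2] with z hz
    rintro ⟨hzO, hzC⟩
    exact hz.2 (hsub hzO) hzC

lemma sparse_sets {Γ X : Type*} [Group Γ] [Countable Γ] [MulAction Γ X] [TopologicalSpace X]
    [PolishSpace X] [MeasurableSpace X] [BorelSpace X]
    (hact : ∀ γ : Γ, Measurable (fun x : X => γ • x)) (E : ℕ → Finset Γ) :
    ∃ (B : ℕ → Set X) (β : ℕ → Bool), (∀ n, MeasurableSet (B n)) ∧
      (∀ n, ∀ x ∈ B n, ∀ e ∈ E n, e • x ∈ B n → e • x = x) ∧
      {x : X | ∀ γ : Γ, ∀ b : Bool, ∃ n, β n = b ∧ γ • x ∈ B n} ∈ residual X := by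
  classical
  obtain ⟨bs, hbc, -, hb⟩ := TopologicalSpace.exists_countable_basis X
  have : Countable bs := hbc.to_subtype
  have : Countable (insert ∅ bs : Set (Set X)) := (hbc.insert ∅).to_subtype
  have : Nonempty (insert ∅ bs : Set (Set X)) := ⟨⟨∅, Set.mem_insert _ _⟩⟩
  obtain ⟨q, hq⟩ := exists_surjective_nat (Γ × Bool × (insert ∅ bs : Set (Set X)))
  have hopen : ∀ O ∈ bs, IsOpen O := fun O hO => hb.isOpen hO
  have hex : ∀ n, ∃ B : Set X, MeasurableSet B ∧ (∀ x ∈ B, ∀ e ∈ E n, e • x ∈ B → e • x = x) ∧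
      ((q n).2.2.1 ∈ bs → (q n).2.2.1.Nonempty →
        ¬ IsMeagre ((q n).2.2.1 ∩ (fun x => (q n).1 • x) ⁻¹' B)) := by
    intro n
    set Bf : Set X → Set X := fun O => {x | x ∈ O ∧ ∀ e, e ∈ E n → e • x ∈ O → e • x = x} with hBf
    have hBm : ∀ O ∈ bs, MeasurableSet (Bf O) := by
      intro O hO
      have hOm := (hopen O hO).measurableSet
      refine measurableSet_setOfPred.2 (Measurable.and (measurableSet_setOfPred.1 hOm)
        (Measurable.forall fun e => Measurable.imp measurable_const (Measurable.imp ?_ ?_)))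
      · exact measurableSet_setOfPred.1 (hact e hOm)
      · exact measurableSet_setOfPred.1 (measurableSet_eq_fun (hact e) measurable_id)
    have hBs : ∀ O, ∀ x ∈ Bf O, ∀ e ∈ E n, e • x ∈ Bf O → e • x = x := by
      intro O x hx e he hex
      exact hx.2 e he hex.1
    by_cases hO : (q n).2.2.1 ∈ bs ∧ (q n).2.2.1.Nonempty
    · by_contra hcon
      push Not at hcon
      apply not_isMeagre_of_isOpen (hopen _ hO.1) hO.2
      have hm : IsMeagre (⋃ O : bs, (q n).2.2.1 ∩ (fun x => (q n).1 • x) ⁻¹' (Bf O.1)) :=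
        isMeagre_iUnion fun O => (hcon (Bf O.1) (hBm O.1 O.2) (hBs O.1)).2.2
      refine hm.mono ?_
      intro x hx
      obtain ⟨O, hOb, h1, h2⟩ := sparse_cover bs hb (E n) ((q n).1 • x)
      exact Set.mem_iUnion.2 ⟨⟨O, hOb⟩, hx, h1, h2⟩
    · exact ⟨∅, MeasurableSet.empty, fun x hx => absurd hx (Set.notMem_empty x),
        fun h1 h2 => absurd ⟨h1, h2⟩ hO⟩
  choose B hB1 hB2 hB3 using hex
  refine ⟨B, fun n => (q n).2.1, hB1, hB2, ?_⟩
  have hkey : ∀ p : Γ × Bool, {x : X | ∃ n, (q n).2.1 = p.2 ∧ p.1 • x ∈ B n} ∈ residual X := by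
    intro p
    apply residual_of_nonmeagre bs hb
    · apply MeasurableSet.baireMeasurableSet
      refine measurableSet_setOfPred.2 (Measurable.exists fun n => Measurable.and measurable_const ?_)
      exact measurableSet_setOfPred.1 (hact p.1 (hB1 n))
    · intro O hO hne hm
      obtain ⟨n, hn⟩ := hq (p.1, p.2, ⟨O, Or.inr hO⟩)
      have := hB3 n
      rw [hn] at this
      apply this hO hne
      refine hm.mono ?_
      rintro x ⟨hx1, hx2⟩
      exact ⟨hx1, n, by rw [hn], hx2⟩
  have := (countable_iInter_mem (l := residual X)).2 hkey
  filter_upwards [this] with x hx γ b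
  exact Set.mem_iInter.1 hx (γ, b)

lemma pieces {Γ X : Type*} [Group Γ] [MulAction Γ X] [MeasurableSpace X]
    (hact : ∀ γ : Γ, Measurable (fun x : X => γ • x)) (S : Finset Γ) (c0 c1 : X → Γ)
    (h0S : ∀ x, c0 x ∈ S) (h1S : ∀ x, c1 x ∈ S) (h0 : ∀ g, MeasurableSet {x | c0 x = g})
    (h1 : ∀ g, MeasurableSet {x | c1 x = g})
    (i0 : Function.Injective (fun x => c0 x • x)) (i1 : Function.Injective (fun x => c1 x • x))
    (hr : Set.range (fun x => c0 x • x) = (Set.range (fun x => c1 x • x))ᶜ) :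
    ∃ (n m : ℕ) (A : Fin n → Set X) (B : Fin m → Set X) (α : Fin n → Γ) (β : Fin m → Γ),
      (∀ i, MeasurableSet (A i)) ∧ (∀ j, MeasurableSet (B j)) ∧
      IsParadoxicalDecomposition A B α β := by
  classical
  let e := S.equivFin.symm
  have hsm : ∀ (c : X → Γ) (g : Γ), g⁻¹ • ((fun x => c x • x) '' {x | c x = g}) = {x | c x = g} := by
    intro c g
    ext x
    rw [Set.mem_inv_smul_set_iff]
    constructor
    · rintro ⟨y, hy, he⟩
      have hy' : c y = g := hy
      dsimp only at he
      rw [hy'] at he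
      rw [← MulAction.injective g he]
      exact hy
    · intro hx
      have hx' : c x = g := hx
      exact ⟨x, hx, by dsimp only; rw [hx']⟩
  have hdis : ∀ (c : X → Γ) (i j : Fin S.card), i ≠ j →
      Disjoint {x | c x = (e i).1} {x | c x = (e j).1} := by
    intro c i j hij
    rw [Set.disjoint_left]
    intro x hx hx'
    apply hij
    apply e.injective
    apply Subtype.ext
    exact (show c x = (e i).1 from hx).symm.trans hx'
  have hun : ∀ (c : X → Γ), (∀ x, c x ∈ S) → (⋃ i : Fin S.card, {x | c x = (e i).1}) = Set.univ := by
    intro c hc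
    rw [Set.eq_univ_iff_forall]
    intro x
    rw [Set.mem_iUnion]
    refine ⟨e.symm ⟨c x, hc x⟩, ?_⟩
    rw [Equiv.apply_symm_apply]
    rfl
  refine ⟨S.card, S.card, fun i => (fun x => c0 x • x) '' {x | c0 x = (e i).1},
    fun i => (fun x => c1 x • x) '' {x | c1 x = (e i).1}, fun i => (e i).1⁻¹, fun i => (e i).1⁻¹,
    fun i => img_meas hact S c0 h0S h0 _ (h0 _), fun i => img_meas hact S c1 h1S h1 _ (h1 _),
    ?_, ?_, ?_, ?_, ?_, ?_, ?_, ?_⟩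
  · intro i j hij
    exact (Set.disjoint_image_iff i0).2 (hdis c0 i j hij)
  · intro i j hij
    exact (Set.disjoint_image_iff i1).2 (hdis c1 i j hij)
  · intro i j
    rw [Set.disjoint_left]
    rintro x ⟨y, _, hy⟩ ⟨z, _, hz⟩
    have : x ∈ Set.range (fun x => c0 x • x) := ⟨y, hy⟩
    rw [hr] at this
    exact this ⟨z, hz⟩
  · rw [← Set.image_iUnion, ← Set.image_iUnion, hun c0 h0S, hun c1 h1S, Set.image_univ,
      Set.image_univ, hr, Set.compl_union_self]
  · intro i j hij
    rw [hsm, hsm]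
    exact hdis c0 i j hij
  · intro i j hij
    rw [hsm, hsm]
    exact hdis c1 i j hij
  · simp only [hsm]
    exact hun c0 h0S
  · simp only [hsm]
    exact hun c1 h1S

lemma assembly {Γ X : Type*} [Group Γ] [MulAction Γ X] [MeasurableSpace X]
    (hact : ∀ γ : Γ, Measurable (fun x : X => γ • x)) (S : Finset Γ) (c : X × Bool → Γ)
    (hS : ∀ v, c v ∈ S) (hc : ∀ b g, MeasurableSet {x | c (x, b) = g})
    (hi : Function.Injective (fun v : X × Bool => c v • v.1)) :
    ∃ (n m : ℕ) (A : Fin n → Set X) (B : Fin m → Set X) (α : Fin n → Γ) (β : Fin m → Γ),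
      (∀ i, MeasurableSet (A i)) ∧ (∀ j, MeasurableSet (B j)) ∧
      IsParadoxicalDecomposition A B α β := by
  classical
  set p0 : X → X := fun x => c (x, false) • x with hp0
  set p1 : X → X := fun x => c (x, true) • x with hp1
  have i0 : Function.Injective p0 := by
    intro x y h
    have := hi (a₁ := (x, false)) (a₂ := (y, false)) h
    exact (Prod.mk.inj this).1
  have i1 : Function.Injective p1 := by
    intro x y h
    have := hi (a₁ := (x, true)) (a₂ := (y, true)) h
    exact (Prod.mk.inj this).1
  have i01 : ∀ x y, p0 x ≠ p1 y := by
    intro x y h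
    have := hi (a₁ := (x, false)) (a₂ := (y, true)) h
    exact absurd (Prod.mk.inj this).2 (by decide)
  let Zn : ℕ → Set X := fun n => Nat.rec (Set.range p1) (fun _ Y => p0 '' Y) n
  have hZ0 : Zn 0 = Set.range p1 := rfl
  have hZs : ∀ n, Zn (n + 1) = p0 '' Zn n := fun n => rfl
  have hZm : ∀ n, MeasurableSet (Zn n) := by
    intro n
    induction n with
    | zero =>
      rw [hZ0, ← Set.image_univ]
      exact img_meas hact S (fun x => c (x, true)) (fun x => hS _) (hc true) _ MeasurableSet.univ
    | succ n ih =>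
      rw [hZs]
      exact img_meas hact S (fun x => c (x, false)) (fun x => hS _) (hc false) _ ih
  set Z : Set X := ⋃ n, Zn n with hZdef
  have hZmeas : MeasurableSet Z := MeasurableSet.iUnion hZm
  have hZp0 : ∀ x, x ∈ Z → p0 x ∈ Z := by
    intro x hx
    obtain ⟨n, hn⟩ := Set.mem_iUnion.1 hx
    refine Set.mem_iUnion.2 ⟨n + 1, ?_⟩
    rw [hZs]
    exact ⟨x, hn, rfl⟩
  have hZinv : ∀ z ∈ Z, z ∉ Set.range p1 → ∃ x ∈ Z, p0 x = z := by
    intro z hz hz1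
    obtain ⟨n, hn⟩ := Set.mem_iUnion.1 hz
    cases n with
    | zero => exact absurd hn hz1
    | succ n =>
      rw [hZs] at hn
      obtain ⟨x, hx, rfl⟩ := hn
      exact ⟨x, Set.mem_iUnion.2 ⟨n, hx⟩, rfl⟩
  have hR1Z : Set.range p1 ⊆ Z := by
    rw [← hZ0]; exact Set.subset_iUnion Zn 0
  let c0 : X → Γ := fun x => if x ∈ Z then c (x, false) else 1
  have hc0Z : ∀ x, x ∈ Z → c0 x • x = p0 x := by
    intro x hx
    simp only [c0, if_pos hx, hp0]
  have hc0n : ∀ x, x ∉ Z → c0 x • x = x := by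
    intro x hx
    simp only [c0, if_neg hx, one_smul]
  refine pieces hact (insert 1 S) c0 (fun x => c (x, true)) ?_ ?_ ?_ (hc true) ?_ i1 ?_
  · intro x
    simp only [c0]
    split_ifs
    · exact Finset.mem_insert_of_mem (hS _)
    · exact Finset.mem_insert_self _ _
  · exact fun x => Finset.mem_insert_of_mem (hS _)
  · intro g
    have : {x | c0 x = g} = (Z ∩ {x | c (x, false) = g}) ∪ (Zᶜ ∩ {_x | (1 : Γ) = g}) := by
      ext x
      simp only [c0, Set.mem_ofPred_eq, Set.mem_union, Set.mem_inter_iff, Set.mem_compl_iff]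
      split_ifs with h <;> simp [h]
    rw [this]
    exact (hZmeas.inter (hc false g)).union (hZmeas.compl.inter (MeasurableSet.const _))
  · intro x y h
    dsimp only at h
    by_cases hx : x ∈ Z <;> by_cases hy : y ∈ Z
    · rw [hc0Z x hx, hc0Z y hy] at h
      exact i0 h
    · rw [hc0Z x hx, hc0n y hy] at h
      exact absurd (h ▸ hZp0 x hx) hy
    · rw [hc0n x hx, hc0Z y hy] at h
      exact absurd (h ▸ hZp0 y hy) hx
    · rwa [hc0n x hx, hc0n y hy] at h
  · ext z
    constructor
    · rintro ⟨x, rfl⟩ ⟨y, hy⟩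
      dsimp only at hy
      by_cases hx : x ∈ Z
      · rw [hc0Z x hx] at hy
        exact i01 x y hy.symm
      · rw [hc0n x hx] at hy
        exact hx (hR1Z ⟨y, hy⟩)
    · intro hz
      by_cases hzZ : z ∈ Z
      · obtain ⟨x, hx, rfl⟩ := hZinv z hzZ hz
        exact ⟨x, hc0Z x hx⟩
      · exact ⟨z, hc0n z hzZ⟩

/-- the sets whose trace on `C` is measurable -/
def Cspace {X : Type*} [MeasurableSpace X] (C : Set X) : MeasurableSpace X :=
  MeasurableSpace.map (Subtype.val : C → X) inferInstance

lemma main_countable {Γ X : Type*} [Group Γ] [Countable Γ] [TopologicalSpace X] [PolishSpace X]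
    [MeasurableSpace X] [BorelSpace X] [MulAction Γ X]
    (hact : ∀ γ : Γ, Measurable (fun x : X => γ • x))
    (T : Finset Γ) (d : X × Bool → Γ) (hdT : ∀ v, d v ∈ T)
    (hdi : Function.Injective (fun v : X × Bool => d v • v.1)) :
    ∃ (n m : ℕ) (A : Fin n → Set X) (B : Fin m → Set X) (α : Fin n → Γ) (β : Fin m → Γ),
      (∀ i, BaireMeasurableSet (A i)) ∧ (∀ j, BaireMeasurableSet (B j)) ∧
      IsParadoxicalDecomposition A B α β := by
  classical
  set S : Finset Γ := insert 1 ((T ×ˢ T).image (fun p => p.1 * p.2)) with hS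
  have hinv : HInv (NB (X := X) S) 0 (Set.univ : Set (X × Bool)) ∅ := by
    refine hinv_zero S T ?_ d hdT hdi
    intro t ht t' ht'
    exact Finset.mem_insert_of_mem (Finset.mem_image.2 ⟨(t, t'), by simp [ht, ht'], rfl⟩)
  choose E hE using fun n : ℕ => sparse_of (X := X) S (2 ^ (n + 1))
  obtain ⟨B, β, hB1, hB2, hC⟩ := sparse_sets hact E
  set C := {x : X | ∀ γ : Γ, ∀ b : Bool, ∃ n, β n = b ∧ γ • x ∈ B n} with hCdef
  have hCm : MeasurableSet C := by
    refine measurableSet_setOfPred.2 (Measurable.forall fun γ => Measurable.forall fun b =>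
      Measurable.exists fun n => Measurable.and measurable_const ?_)
    exact measurableSet_setOfPred.1 (hact γ (hB1 n))
  have hCinv : ∀ (g : Γ) x, x ∈ C → g • x ∈ C := by
    intro g x hx γ b
    obtain ⟨n, h1, h2⟩ := hx (γ * g) b
    exact ⟨n, h1, by rwa [mul_smul] at h2⟩
  have hCinv' : ∀ (g : Γ) x, g • x ∈ C → x ∈ C := by
    intro g x hx
    have := hCinv g⁻¹ _ hx
    rwa [inv_smul_smul] at this
  obtain ⟨c, c1, c2, c3⟩ := limit_matching hact S ⟨1, Finset.mem_insert_self _ _⟩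
    (fun n => {v : X × Bool | v.1 ∈ B n ∧ v.2 = β n})
    (fun n => (measurable_fst (hB1 n)).inter (measurableSet_eq_fun measurable_snd measurable_const))
    (fun n => hE n (B n) (β n) (hB2 n)) hinv
  have hcov : ∀ v : X × Bool, v.1 ∈ C → v ∈ ⋃ n, {v : X × Bool | v.1 ∈ B n ∧ v.2 = β n} := by
    intro v hv
    obtain ⟨n, h1, h2⟩ := hv 1 v.2
    rw [one_smul] at h2
    exact Set.mem_iUnion.2 ⟨n, h2, h1.symm⟩
  let c' : X × Bool → Γ := fun v => if v.1 ∈ C then c v else d v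
  have hc'C : ∀ v : X × Bool, v.1 ∈ C → c' v = c v := fun v hv => if_pos hv
  have hc'n : ∀ v : X × Bool, v.1 ∉ C → c' v = d v := fun v hv => if_neg hv
  have hm : ∀ Y : Set X, @MeasurableSet X (Cspace C) Y → BaireMeasurableSet Y := by
    intro Y hY
    have hY' : MeasurableSet ((Subtype.val : C → X) ⁻¹' Y) := hY
    have h1 := hCm.subtype_image hY'
    refine h1.baireMeasurableSet.congr ?_
    rw [Filter.eventuallyEq_set]
    filter_upwards [hC] with x hx
    constructor
    · rintro ⟨y, hy, rfl⟩
      exact hy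
    · intro hxY
      exact ⟨⟨x, hx⟩, hxY, rfl⟩
  have hactm : ∀ γ : Γ, @Measurable X X (Cspace C) (Cspace C) (fun x : X => γ • x) := by
    intro γ Y hY
    have hY' : MeasurableSet ((Subtype.val : C → X) ⁻¹' Y) := hY
    change MeasurableSet ((Subtype.val : C → X) ⁻¹' ((fun x => γ • x) ⁻¹' Y))
    have : Measurable (fun x : C => (⟨γ • x.1, hCinv γ x.1 x.2⟩ : C)) :=
      ((hact γ).comp measurable_subtype_coe).subtype_mk
    exact this hY'
  obtain ⟨n, k, A, B', α, β', h1, h2, h3⟩ := @assembly Γ X _ _ (Cspace C) hactm (S ∪ T) c' (by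
      intro v
      by_cases hv : v.1 ∈ C
      · rw [hc'C v hv]; exact Finset.mem_union_left _ (c1 v)
      · rw [hc'n v hv]; exact Finset.mem_union_right _ (hdT v)) (by
      intro b g
      change MeasurableSet ((Subtype.val : C → X) ⁻¹' {x | c' (x, b) = g})
      have : (Subtype.val : C → X) ⁻¹' {x | c' (x, b) = g} =
          (fun x : C => (x.1, b)) ⁻¹' {v | c v = g} := by
        ext x
        simp only [Set.mem_preimage, Set.mem_ofPred_eq]
        rw [hc'C (x.1, b) x.2]
      rw [this]
      exact (measurable_subtype_coe.prodMk measurable_const) (c2 g)) (by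
      intro v u he
      dsimp only at he
      by_cases hv : v.1 ∈ C <;> by_cases hu : u.1 ∈ C
      · rw [hc'C v hv, hc'C u hu] at he
        exact c3 (hcov v hv) (hcov u hu) he
      · exact absurd (hCinv' _ _ (he ▸ hCinv (c' v) _ hv)) hu
      · exact absurd (hCinv' _ _ (he ▸ hCinv (c' u) _ hu)) hv
      · rw [hc'n v hv, hc'n u hu] at he
        exact hdi he)
  exact ⟨n, k, A, B', α, β', fun i => hm _ (h1 i), fun i => hm _ (h2 i), h3⟩

lemma exists_d {Γ X : Type*} [Group Γ] [MulAction Γ X]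
    {n m : ℕ} {A : Fin n → Set X} {B : Fin m → Set X} {α : Fin n → Γ} {β : Fin m → Γ}
    (h : IsParadoxicalDecomposition A B α β) :
    ∃ (T : Finset Γ) (d : X × Bool → Γ), (∀ v, d v ∈ T) ∧
      Function.Injective (fun v : X × Bool => d v • v.1) := by
  classical
  obtain ⟨hA, hB, hAB, -, -, -, hAu, hBu⟩ := h
  have fA : ∀ x : X, ∃ i, (α i)⁻¹ • x ∈ A i := by
    intro x
    have : x ∈ ⋃ i, α i • A i := hAu ▸ Set.mem_univ x
    obtain ⟨i, hi⟩ := Set.mem_iUnion.1 this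
    exact ⟨i, Set.mem_smul_set_iff_inv_smul_mem.1 hi⟩
  have fB : ∀ x : X, ∃ i, (β i)⁻¹ • x ∈ B i := by
    intro x
    have : x ∈ ⋃ i, β i • B i := hBu ▸ Set.mem_univ x
    obtain ⟨i, hi⟩ := Set.mem_iUnion.1 this
    exact ⟨i, Set.mem_smul_set_iff_inv_smul_mem.1 hi⟩
  choose a ha using fA
  choose b hb using fB
  have uA : ∀ i j z, z ∈ A i → z ∈ A j → i = j := by
    intro i j z h1 h2
    by_contra hne
    exact Set.disjoint_left.1 (hA i j hne) h1 h2
  have uB : ∀ i j z, z ∈ B i → z ∈ B j → i = j := by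
    intro i j z h1 h2
    by_contra hne
    exact Set.disjoint_left.1 (hB i j hne) h1 h2
  refine ⟨Finset.univ.image (fun i => (α i)⁻¹) ∪ Finset.univ.image (fun i => (β i)⁻¹),
    fun v => if v.2 = true then (β (b v.1))⁻¹ else (α (a v.1))⁻¹, ?_, ?_⟩
  · rintro ⟨x, _ | _⟩ <;> simp
  · rintro ⟨x, _ | _⟩ ⟨y, _ | _⟩ he
    · have he' : (α (a x))⁻¹ • x = (α (a y))⁻¹ • y := by simpa using he
      have := uA _ _ _ (ha x) (he' ▸ ha y)
      rw [this] at he'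
      rw [MulAction.injective _ he']
    · have he' : (α (a x))⁻¹ • x = (β (b y))⁻¹ • y := by simpa using he
      exact absurd (he' ▸ hb y) (Set.disjoint_left.1 (hAB _ _) (ha x))
    · have he' : (β (b x))⁻¹ • x = (α (a y))⁻¹ • y := by simpa using he
      exact absurd (he' ▸ hb x) (Set.disjoint_left.1 (hAB _ _) (ha y))
    · have he' : (β (b x))⁻¹ • x = (β (b y))⁻¹ • y := by simpa using he
      have := uB _ _ _ (hb x) (he' ▸ hb y)
      rw [this] at he'
      rw [MulAction.injective _ he']


/-- **Theorem (Marks–Unger).** If a group acting on a Polish space by Borel automorphisms has a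
paradoxical decomposition, then it has a paradoxical decomposition in which every piece has the
Baire property. -/
theorem baire_paradox {Γ X : Type*} [Group Γ] [TopologicalSpace X] [PolishSpace X]
    [MeasurableSpace X] [BorelSpace X] [MulAction Γ X]
    (hBorelAction : ∀ γ : Γ, Measurable (fun x : X => γ • x))
    (hpara : ∃ (n m : ℕ) (A : Fin n → Set X) (B : Fin m → Set X) (α : Fin n → Γ)
      (β : Fin m → Γ), IsParadoxicalDecomposition A B α β) :
    ∃ (n m : ℕ) (A : Fin n → Set X) (B : Fin m → Set X) (α : Fin n → Γ) (β : Fin m → Γ),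
      (∀ i, BaireMeasurableSet (A i)) ∧ (∀ j, BaireMeasurableSet (B j)) ∧
      IsParadoxicalDecomposition A B α β := by
  obtain ⟨n, m, A, B, α, β, h⟩ := hpara
  let φ : FreeGroup (Fin n ⊕ Fin m) →* Γ := FreeGroup.lift (Sum.elim α β)
  let Δ : Subgroup Γ := φ.range
  have : Countable (FreeGroup (Fin n ⊕ Fin m)) := by
    unfold FreeGroup
    infer_instance
  have : Countable Δ := φ.rangeRestrict_surjective.countable
  let α' : Fin n → Δ := fun i => ⟨α i, FreeGroup.of (Sum.inl i), by simp [φ]⟩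
  let β' : Fin m → Δ := fun i => ⟨β i, FreeGroup.of (Sum.inr i), by simp [φ]⟩
  have h' : IsParadoxicalDecomposition A B α' β' := h
  obtain ⟨T, d, hd, hdi⟩ := exists_d h'
  obtain ⟨n', m', A', B', a, b, h1, h2, h3⟩ :=
    main_countable (fun γ : Δ => hBorelAction γ.1) T d hd hdi
  exact ⟨n', m', A', B', fun i => (a i).1, fun i => (b i).1, h1, h2, h3⟩
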